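/- Let (R, m) be a regular local ring of dimension n containing a field, and let I be a proper ideal of R all of whose minimal primes have height d. Then for every integer i > d, dim_R(H_I^i(R)) ≤ n − (i + 1); in other words, every prime ideal p in the support of H_I^i(R) satisfies ht_R(p) ≥ i + 1. -/

import Mathlib

open CategoryTheory Opposite

noncomputable section

/-- Krull dimension of the support of a module. -/
def moduleSuppDim (R : Type) [CommRing R] (M : Type) [AddCommGroup M] [Module R M] :
    WithBot ℕ∞ :=
  Order.krullDim (Module.support R M)

/-- `M` has injective dimension at most `n` (as `R`-module), characterized by
vanishing of `Ext^i(N, M)` for all `i > n`. -/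
def injDimLE (R : Type) [CommRing R] (M : Type) [AddCommGroup M] [Module R M] (n : ℕ) : Prop :=
  ∀ (N : ModuleCat R) (i : ℕ), n < i →
    Subsingleton (((Ext R (ModuleCat R) i).obj (op N)).obj (ModuleCat.of R M))

/-- The injective dimension of `M` as an `R`-module, valued in `ℕ∞`. -/
def injDim (R : Type) [CommRing R] (M : Type) [AddCommGroup M] [Module R M] : ℕ∞ :=
  sInf {n : ℕ∞ | ∃ m : ℕ, (m : ℕ∞) = n ∧ injDimLE R M m}

/-- The height of an ideal: the infimum of the heights of primes containing it. -/
def idealHeight (R : Type) [CommRing R] (I : Ideal R) : ℕ∞ :=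
  sInf {h : ℕ∞ | ∃ p : PrimeSpectrum R, I ≤ p.asIdeal ∧ Order.height p = h}

/-- A regular local ring: a Noetherian local ring whose maximal ideal can be generated
by `dim R` elements. -/
def IsRegularLocal (R : Type) [CommRing R] [IsLocalRing R] : Prop :=
  IsNoetherianRing R ∧
    ∃ s : Finset R, Ideal.span (s : Set R) = IsLocalRing.maximalIdeal R ∧
      (s.card : WithBot ℕ∞) = ringKrullDim R

/-- A ring contains a field if some subring of it is a field. -/
def ContainsField (R : Type) [CommRing R] : Prop :=
  ∃ k : Subring R, IsField k

/-- The underlying module of the `i`-th local cohomology of `R` with support in `I`. -/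
abbrev LocalCohomologyMod (R : Type) [CommRing R] (I : Ideal R) (i : ℕ) : Type :=
  (localCohomology I i).obj (ModuleCat.of R R)

end

/-!
Let `p` be a prime of height at most `i = k + 1` that is not minimal over `I` in case of equality;
we show that `p` is not in the support of `H_I^i(N)`, the colimit of the modules
`Ext^i(R ⧸ I ^ t, N)`. Put `A = R_p`, a regular local ring of dimension at most `k + 1` with maximal
ideal `𝔪`. If `dim A ≤ k` then `A ⧸ I ^ t A` has projective dimension at most `k`. If
`dim A = k + 1`, choose a minimal prime `q ≠ 𝔪` of `I A` (the case `I A = A` is trivial). The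
saturation of `I ^ t' A` at `𝔪` lies in the symbolic power `q^(t')`, which by Chevalley's theorem is
contained in a high power of `𝔪` when `t'` is large. By Artin–Rees some `t'` then satisfies
`I ^ t' A ≤ sat (I ^ t' A) ≤ I ^ t A`. The quotient by a saturated ideal has a regular element in
`𝔪`, so its projective dimension is at most `k`.

In either case the transition map `R ⧸ I ^ t' → R ⧸ I ^ t` factors at `p` through a module of
projective dimension at most `k`, so the map it induces on `Ext^{k+1}(-, N)` is killed by an element
outside `p`, and so is every element of the colimit.
-/

open IsLocalRing

universe u

/-! ### Projective dimension -/

section ProjectiveDimension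

variable {A : Type u} [CommRing A] {K F M : Type u} [AddCommGroup K] [Module A K]
  [AddCommGroup F] [Module A F] [AddCommGroup M] [Module A M]

theorem hasProjectiveDimensionLE_zero_iff_projective :
    HasProjectiveDimensionLE (ModuleCat.of A M) 0 ↔ Module.Projective A M := by
  rw [← projective_iff_hasProjectiveDimensionLE_zero, IsProjective.iff_projective]

theorem hasProjectiveDimensionLE_succ_iff_of_exact [Module.Projective A F]
    {f : K →ₗ[A] F} {g : F →ₗ[A] M} (hf : Function.Injective f) (hg : Function.Surjective g)
    (hfg : Function.Exact f g) (k : ℕ) :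
    HasProjectiveDimensionLE (ModuleCat.of A M) (k + 1) ↔
      HasProjectiveDimensionLE (ModuleCat.of A K) k :=
  have hS := ModuleCat.shortComplex_shortExact
    (.mk (ModuleCat.ofHom f) (ModuleCat.ofHom g)
      (ModuleCat.hom_ext hfg.linearMap_comp_eq_zero)) hfg hf hg
  hS.hasProjectiveDimensionLT_X₃_iff k ((IsProjective.iff_projective (R := A) F).mp inferInstance)

theorem hasProjectiveDimensionLE_of_leftInverse {f : K →ₗ[A] F} {g : F →ₗ[A] K}
    (hgf : Function.LeftInverse g f) (k : ℕ)
    [HasProjectiveDimensionLE (ModuleCat.of A F) k] :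
    HasProjectiveDimensionLE (ModuleCat.of A K) k :=
  Retract.hasProjectiveDimensionLT (X := ModuleCat.of A K) (Y := ModuleCat.of A F)
    ⟨ModuleCat.ofHom f, ModuleCat.ofHom g, ModuleCat.hom_ext (LinearMap.ext hgf)⟩ _

theorem quotSMulTop_map_injective {f : K →ₗ[A] F} {g : F →ₗ[A] M} (hf : Function.Injective f)
    (hfg : Function.Exact f g) {x : A} (hx : IsSMulRegular M x) :
    Function.Injective (QuotSMulTop.map x f) := by
  have h := QuotSMulTop.map_first_exact_on_four_term_exact_of_isSMulRegular_last
    ((LinearMap.exact_zero_iff_injective K f).mpr hf) hfg hx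
  rwa [map_zero, LinearMap.exact_zero_iff_injective] at h

variable [IsLocalRing A]

theorem isLocalRing_quotient {I : Ideal A} (hI : I ≤ maximalIdeal A) : IsLocalRing (A ⧸ I) :=
  have : Nontrivial (A ⧸ I) :=
    Ideal.Quotient.nontrivial_iff.mpr fun h ↦ Ideal.IsPrime.ne_top' (top_le_iff.mp (h ▸ hI))
  .of_surjective' _ Ideal.Quotient.mk_surjective

variable [IsNoetherianRing A] {x : A}

theorem projective_quotSMulTop_iff [Module.Finite A M] (hx : x ∈ maximalIdeal A)
    (hxM : IsSMulRegular M x) :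
    Module.Projective (A ⧸ Ideal.span {x}) (QuotSMulTop x M) ↔ Module.Projective A M := by
  have := isLocalRing_quotient ((Ideal.span_singleton_le_iff_mem _).mpr hx)
  have : Module.Finite (A ⧸ Ideal.span {x}) (QuotSMulTop x M) :=
    Module.Finite.of_restrictScalars_finite A _ _
  have := Module.finitePresentation_of_finite A M
  have key := Module.free_quotSMulTop_iff_free A M (maximalIdeal_le_jacobson _ hx) hxM
  refine ⟨fun _ ↦ ?_, fun _ ↦ ?_⟩
  · have := key.mp Module.free_of_flat_of_isLocalRing
    infer_instance
  · have := key.mpr Module.free_of_flat_of_isLocalRing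
    infer_instance

theorem hasProjectiveDimensionLE_quotSMulTop_iff (hx : x ∈ maximalIdeal A)
    (hxA : IsSMulRegular A x) (k : ℕ) [Module.Finite A M] (hxM : IsSMulRegular M x) :
    HasProjectiveDimensionLE (ModuleCat.of (A ⧸ Ideal.span {x}) (QuotSMulTop x M)) k ↔
      HasProjectiveDimensionLE (ModuleCat.of A M) k := by
  induction k generalizing M with
  | zero =>
    simpa only [hasProjectiveDimensionLE_zero_iff_projective] using
      projective_quotSMulTop_iff hx hxM
  | succ k ih =>
    obtain ⟨n, π, hπ⟩ := Module.Finite.exists_fin' A M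
    have hexact := π.exact_subtype_ker_map
    have hxK : IsSMulRegular π.ker x := (IsSMulRegular.pi fun _ ↦ hxA).submodule _ _
    have hA : Function.Surjective (algebraMap A (A ⧸ Ideal.span {x})) :=
      Ideal.Quotient.mk_surjective
    rw [hasProjectiveDimensionLE_succ_iff_of_exact π.ker.injective_subtype hπ hexact, ← ih hxK]
    exact hasProjectiveDimensionLE_succ_iff_of_exact
      (f := (QuotSMulTop.map x π.ker.subtype).extendScalarsOfSurjective hA)
      (g := (QuotSMulTop.map x π).extendScalarsOfSurjective hA)
      (quotSMulTop_map_injective π.ker.injective_subtype hexact hxM)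
      (QuotSMulTop.map_surjective x hπ) (QuotSMulTop.map_exact x hexact hπ) k

end ProjectiveDimension

/-! ### Regular local rings -/

section LocalRing

variable {A : Type u} [CommRing A]

theorem spanFinrank_le_spanFinrank_map_quotient_add_one [IsNoetherianRing A] {I : Ideal A} {x : A}
    (hx : x ∈ I) :
    I.spanFinrank ≤ (I.map (Ideal.Quotient.mk (Ideal.span {x}))).spanFinrank + 1 := by
  classical
  set q := Ideal.Quotient.mk (Ideal.span {x})
  obtain ⟨s, hs_card, hs⟩ :=
    (IsNoetherian.noetherian (I.map q)).exists_span_finset_card_eq_spanFinrank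
  obtain ⟨t, ht_card, ht⟩ : ∃ t : Finset A, t.card ≤ s.card ∧ t.image q = s := by
    refine ⟨s.image (Function.surjInv Ideal.Quotient.mk_surjective), Finset.card_image_le, ?_⟩
    simp [Finset.image_image, q, Function.comp_def, Function.surjInv_eq]
  have hI : Ideal.span ↑(insert x t) = I := by
    have hmap : (Ideal.span (t : Set A)).map q = I.map q := by
      rw [Ideal.map_span, ← Finset.coe_image, ht]; exact hs
    have hcomap := congrArg (Ideal.comap q) hmap
    rw [Ideal.comap_map_of_surjective' _ Ideal.Quotient.mk_surjective,
      Ideal.comap_map_of_surjective' _ Ideal.Quotient.mk_surjective, Ideal.mk_ker,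
      sup_eq_left.mpr ((Ideal.span_singleton_le_iff_mem I).mpr hx)] at hcomap
    rw [Finset.coe_insert, Ideal.span_insert, sup_comm, hcomap]
  calc I.spanFinrank ≤ (insert x t).card := by
        rw [← hI, ← Set.ncard_coe_finset]
        exact Submodule.spanFinrank_span_le_ncard_of_finite (Finset.finite_toSet _)
    _ ≤ t.card + 1 := Finset.card_insert_le _ _
    _ ≤ _ := by rw [← hs_card]; gcongr

theorem span_le_span_insert_sum_diff {M : Type*} [AddCommGroup M] [Module A M] {s : Finset M}
    {c : s → A} {a : s} (ha : IsUnit (c a)) :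
    Submodule.span A (s : Set M) ≤
      Submodule.span A (insert (∑ b, c b • (b : M)) ((s : Set M) \ {a.1})) := by
  classical
  have hmem : ∀ b : s, b ≠ a →
      (b : M) ∈ Submodule.span A (insert (∑ b, c b • (b : M)) ((s : Set M) \ {a.1})) :=
    fun b hba ↦ Submodule.subset_span (.inr ⟨b.2, fun h ↦ hba (Subtype.ext h)⟩)
  refine Submodule.span_le.mpr fun b hb ↦ ?_
  obtain rfl | hba := eq_or_ne ⟨b, hb⟩ a
  · rw [SetLike.mem_coe, ← Submodule.smul_mem_iff_of_isUnit _ ha,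
      eq_sub_of_add_eq (Finset.add_sum_erase _ (fun b : s ↦ c b • b.1) (Finset.mem_univ _))]
    exact sub_mem (Submodule.subset_span (.inl rfl)) (sum_mem fun b hb ↦
      Submodule.smul_mem _ _ (hmem b (Finset.ne_of_mem_erase hb)))
  · exact hmem ⟨b, hb⟩ hba

variable [IsLocalRing A]

theorem exists_mem_span_insert_diff {s : Finset A} (hs : Ideal.span (s : Set A) = maximalIdeal A)
    {x : A} (hx : x ∈ maximalIdeal A) (hx2 : x ∉ maximalIdeal A ^ 2) :
    ∃ a ∈ s, maximalIdeal A ≤ Ideal.span (insert x (s \ {a})) := by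
  obtain ⟨c, hc⟩ := Submodule.mem_span_finset'.mp (hs ▸ hx)
  obtain ⟨a, ha⟩ : ∃ a, IsUnit (c a) := by
    by_contra! h
    rw [← hc, pow_two] at hx2
    exact hx2 (Ideal.sum_mem _ fun a _ ↦ Ideal.mul_mem_mul ((mem_maximalIdeal _).mpr (h a))
      (hs ▸ Ideal.subset_span a.2))
  exact ⟨a, a.2, by simpa only [← hs, ← hc] using span_le_span_insert_sum_diff ha⟩

variable [IsNoetherianRing A] {x : A}

theorem spanFinrank_map_quotient_add_one_le (hx : x ∈ maximalIdeal A)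
    (hx2 : x ∉ maximalIdeal A ^ 2) :
    ((maximalIdeal A).map (Ideal.Quotient.mk (Ideal.span {x}))).spanFinrank + 1 ≤
      (maximalIdeal A).spanFinrank := by
  set q := Ideal.Quotient.mk (Ideal.span {x})
  obtain ⟨s, hs_card, hs⟩ :=
    (IsNoetherian.noetherian (maximalIdeal A)).exists_span_finset_card_eq_spanFinrank
  obtain ⟨a, ha, hle⟩ := exists_mem_span_insert_diff hs hx hx2
  have hspan : (maximalIdeal A).map q = Ideal.span (q '' (s \ {a})) := by
    refine le_antisymm ((Ideal.map_mono hle).trans ?_) ?_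
    · rw [Ideal.map_span, Set.image_insert_eq,
        Ideal.Quotient.eq_zero_iff_mem.mpr (Ideal.mem_span_singleton_self x),
        Ideal.span_insert_zero]
    · rw [← hs]
      exact (Ideal.map_span q _).ge.trans (Ideal.map_mono (Ideal.span_mono Set.sdiff_subset))
  have hcard : (s \ {a} : Set A).ncard + 1 = s.card := by
    rw [Set.ncard_sdiff_singleton_add_one ha s.finite_toSet, Set.ncard_coe_finset]
  rw [hspan, ← hs_card, ← hcard]
  gcongr
  have hfin : (s \ {a} : Set A).Finite := s.finite_toSet.sdiff
  exact (Submodule.spanFinrank_span_le_ncard_of_finite (hfin.image q)).trans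
    (Set.ncard_image_le hfin)

theorem spanFinrank_maximalIdeal_quotient_span_singleton (hx : x ∈ maximalIdeal A)
    (hx2 : x ∉ maximalIdeal A ^ 2) [IsLocalRing (A ⧸ Ideal.span {x})] :
    (maximalIdeal (A ⧸ Ideal.span {x})).spanFinrank + 1 = (maximalIdeal A).spanFinrank := by
  rw [← map_maximalIdeal_of_surjective _ Ideal.Quotient.mk_surjective]
  exact (spanFinrank_map_quotient_add_one_le hx hx2).antisymm
    (spanFinrank_le_spanFinrank_map_quotient_add_one hx)

theorem isRegularLocalRing_of_quotient (hx : x ∈ maximalIdeal A) (hxA : IsSMulRegular A x)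
    [IsRegularLocalRing (A ⧸ Ideal.span {x})] : IsRegularLocalRing A := by
  refine .of_spanFinrank_maximalIdeal_le _ ?_
  rw [← ringKrullDim_quotient_span_singleton_succ_eq_ringKrullDim hxA hx,
    ← IsRegularLocalRing.spanFinrank_maximalIdeal,
    ← map_maximalIdeal_of_surjective _ Ideal.Quotient.mk_surjective]
  exact_mod_cast spanFinrank_le_spanFinrank_map_quotient_add_one hx

theorem exists_mem_maximalIdeal_notMem_sq_notMem (hA : ¬ IsField A) {S : Set (Ideal A)}
    (hS : S.Finite) (hprime : ∀ P ∈ S, P.IsPrime) (hne : maximalIdeal A ∉ S) :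
    ∃ x ∈ maximalIdeal A, x ∉ maximalIdeal A ^ 2 ∧ ∀ P ∈ S, x ∉ P := by
  by_contra! hcover
  have hsub : (maximalIdeal A : Set A) ⊆ ⋃ P ∈ insert (maximalIdeal A ^ 2) S, P := fun x hx ↦ by
    by_cases hx2 : x ∈ maximalIdeal A ^ 2
    · exact Set.mem_biUnion (Set.mem_insert _ _) hx2
    · obtain ⟨P, hP, hxP⟩ := hcover x hx hx2
      exact Set.mem_biUnion (Set.mem_insert_of_mem _ hP) hxP
  obtain ⟨P, hP | hP, hle⟩ :=
    (Ideal.subset_union_prime_finite (f := id) (hS.insert _) (maximalIdeal A ^ 2)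
      (maximalIdeal A ^ 2) fun P hP h _ ↦ hprime P (hP.resolve_left h)).mp hsub
  · refine hA (isField_iff_maximalIdeal_eq.mpr ?_)
    refine Submodule.eq_bot_of_le_smul_of_le_jacobson_bot (maximalIdeal A) _
      (IsNoetherian.noetherian _) ?_ (maximalIdeal_le_jacobson _)
    rwa [smul_eq_mul, ← pow_two, ← hP]
  · have := hprime P hP
    exact hne (((maximalIdeal.isMaximal A).eq_of_le this.ne_top hle) ▸ hP)

theorem isField_iff_spanFinrank_maximalIdeal_eq_zero :
    IsField A ↔ (maximalIdeal A).spanFinrank = 0 := by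
  rw [isField_iff_maximalIdeal_eq,
    Submodule.spanFinrank_eq_zero_iff_eq_bot (IsNoetherian.noetherian _)]

-- A minimal prime contained in `(x)` but not containing `x` equals `x` times itself.
theorem isDomain_of_isPrime_span_singleton (hx : x ∈ maximalIdeal A)
    (hprime : (Ideal.span {x}).IsPrime) (hmin : ∀ P ∈ minimalPrimes A, x ∉ P) : IsDomain A := by
  obtain ⟨P, hP, hPx⟩ := Ideal.exists_minimalPrimes_le (bot_le (a := Ideal.span {x}))
  have hPprime := hP.1.1
  suffices P = ⊥ by
    subst this
    exact IsDomain.of_bot_isPrime A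
  refine Submodule.eq_bot_of_le_smul_of_le_jacobson_bot (maximalIdeal A) _
    (IsNoetherian.noetherian _) (fun y hy ↦ ?_) (maximalIdeal_le_jacobson _)
  obtain ⟨z, rfl⟩ := Ideal.mem_span_singleton'.mp (hPx hy)
  rw [mul_comm]
  exact Ideal.mul_mem_mul hx ((hPprime.mem_or_mem hy).resolve_right (hmin P hP))

end LocalRing

section RegularLocalRing

variable {A : Type u} [CommRing A] [IsRegularLocalRing A]

theorem isRegularLocalRing_quotient_span_singleton {x : A} (hx : x ∈ maximalIdeal A)
    (hx2 : x ∉ maximalIdeal A ^ 2) : IsRegularLocalRing (A ⧸ Ideal.span {x}) := by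
  have := isLocalRing_quotient ((Ideal.span_singleton_le_iff_mem _).mpr hx)
  refine .of_spanFinrank_maximalIdeal_le _ ?_
  have hdim := ringKrullDim_le_ringKrullDim_quotient_add_encard (R := A) {x}
    (by simpa [ringJacobson_eq_maximalIdeal] using hx)
  rw [← IsRegularLocalRing.spanFinrank_maximalIdeal, Set.encard_singleton] at hdim
  rw [← ENat.WithBot.add_le_add_one_right_iff,
    ← map_maximalIdeal_of_surjective _ Ideal.Quotient.mk_surjective]
  exact le_trans (by exact_mod_cast spanFinrank_map_quotient_add_one_le hx hx2) hdim

theorem maximalIdeal_notMem_minimalPrimes (hA : ¬ IsField A) :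
    maximalIdeal A ∉ minimalPrimes A := fun hmem ↦ by
  have hdim := maximalIdeal_height_eq_ringKrullDim (R := A)
  rw [Ideal.height_eq_zero_iff.mpr hmem, ← IsRegularLocalRing.spanFinrank_maximalIdeal] at hdim
  exact hA (isField_iff_spanFinrank_maximalIdeal_eq_zero.mpr (by exact_mod_cast hdim.symm))

theorem isDomain_of_isRegularLocalRing (A : Type u) [CommRing A] [IsRegularLocalRing A] :
    IsDomain A := by
  induction he : (maximalIdeal A).spanFinrank generalizing A with
  | zero => exact (isField_iff_spanFinrank_maximalIdeal_eq_zero.mpr he).isDomain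
  | succ e ih =>
    have hA : ¬ IsField A := by simp [isField_iff_spanFinrank_maximalIdeal_eq_zero, he]
    obtain ⟨x, hx, hx2, hxP⟩ := exists_mem_maximalIdeal_notMem_sq_notMem hA
      (minimalPrimes.finite_of_isNoetherianRing A) (fun P hP ↦ hP.1.1)
      (maximalIdeal_notMem_minimalPrimes hA)
    have := isRegularLocalRing_quotient_span_singleton hx hx2
    have hquot := spanFinrank_maximalIdeal_quotient_span_singleton hx hx2
    have := ih (A ⧸ Ideal.span {x}) (by lia)
    exact isDomain_of_isPrime_span_singleton hx
      ((Ideal.Quotient.isDomain_iff_prime _).mp this) hxP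

theorem hasProjectiveDimensionLE_spanFinrank_maximalIdeal {A : Type u} [CommRing A]
    [IsRegularLocalRing A] (M : Type u) [AddCommGroup M] [Module A M] [Module.Finite A M] :
    HasProjectiveDimensionLE (ModuleCat.of A M) (maximalIdeal A).spanFinrank := by
  induction he : (maximalIdeal A).spanFinrank generalizing A M with
  | zero =>
    let := (isField_iff_spanFinrank_maximalIdeal_eq_zero.mpr he).toField
    exact hasProjectiveDimensionLE_zero_iff_projective.mpr (Module.Projective.of_free (R := A))
  | succ e ih =>
    have hA : ¬ IsField A := by simp [isField_iff_spanFinrank_maximalIdeal_eq_zero, he]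
    have := isDomain_of_isRegularLocalRing A
    obtain ⟨x, hx, hx2, -⟩ := exists_mem_maximalIdeal_notMem_sq_notMem hA Set.finite_empty
      (by simp) (by simp)
    have hxA : IsSMulRegular A x :=
      fun _ _ h ↦ mul_left_cancel₀ (ne_of_mem_of_not_mem (zero_mem _) hx2).symm h
    have := isRegularLocalRing_quotient_span_singleton hx hx2
    have hquot := spanFinrank_maximalIdeal_quotient_span_singleton hx hx2
    obtain ⟨n, π, hπ⟩ := Module.Finite.exists_fin' A M
    have hxK : IsSMulRegular π.ker x := (IsSMulRegular.pi fun _ ↦ hxA).submodule _ _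
    rw [hasProjectiveDimensionLE_succ_iff_of_exact π.ker.injective_subtype hπ
      π.exact_subtype_ker_map, ← hasProjectiveDimensionLE_quotSMulTop_iff hx hxA e hxK]
    have : Module.Finite (A ⧸ Ideal.span {x}) (QuotSMulTop x π.ker) :=
      Module.Finite.of_restrictScalars_finite A _ _
    exact ih (QuotSMulTop x π.ker) (by lia)

end RegularLocalRing

/-! ### Localization of regular local rings -/

section SerreCriterion

variable {A : Type u} [CommRing A] [IsLocalRing A]

theorem exists_finset_linearCombination_surjective_ker_le (M : Type*) [AddCommGroup M]
    [Module A M] [Module.Finite A M] :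
    ∃ s : Finset M, Function.Surjective (Fintype.linearCombination A ((↑) : s → M)) ∧
      ∀ v ∈ (Fintype.linearCombination A ((↑) : s → M)).ker, ∀ a, v a ∈ maximalIdeal A := by
  obtain ⟨s, hs_card, hs⟩ :=
    (Module.Finite.fg_top (R := A) (M := M)).exists_span_finset_card_eq_spanFinrank
  refine ⟨s, ?_, fun v hv a ↦ (mem_maximalIdeal _).mpr fun ha ↦ ?_⟩
  · rw [← LinearMap.range_eq_top, Fintype.range_linearCombination, Subtype.range_coe, ← hs]
  have hle := span_le_span_insert_sum_diff ha
  rw [← Fintype.linearCombination_apply, LinearMap.mem_ker.mp hv, Submodule.span_insert_zero,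
    hs, top_le_iff] at hle
  have hlt : ((s : Set M) \ {a.1}).ncard < s.card := by
    rw [← Set.ncard_coe_finset]
    exact Set.ncard_sdiff_singleton_lt_of_mem a.2 s.finite_toSet
  have := Submodule.spanFinrank_span_le_ncard_of_finite (R := A)
    (s.finite_toSet.sdiff (t := {a.1}))
  rw [hle] at this
  lia

-- `x` is part of a basis of `𝔪 ⧸ 𝔪 ^ 2`; its coordinate functional splits off the residue field.
open Pointwise in
theorem exists_leftInverse_residueField_quotSMulTop {x : A} (hx : x ∈ maximalIdeal A)
    (hx2 : x ∉ maximalIdeal A ^ 2) :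
    ∃ (f : ResidueField A →ₗ[A] QuotSMulTop x (maximalIdeal A))
      (g : QuotSMulTop x (maximalIdeal A) →ₗ[A] ResidueField A), Function.LeftInverse g f := by
  let f : ResidueField A →ₗ[A] QuotSMulTop x (maximalIdeal A) :=
    Submodule.liftQ (maximalIdeal A)
      (LinearMap.toSpanSingleton A _ (Submodule.Quotient.mk ⟨x, hx⟩)) fun y hy ↦ by
        rw [LinearMap.mem_ker, LinearMap.toSpanSingleton_apply, ← Submodule.Quotient.mk_smul,
          Submodule.Quotient.mk_eq_zero,
          show y • (⟨x, hx⟩ : maximalIdeal A) = x • ⟨y, hy⟩ from Subtype.ext (mul_comm y x)]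
        exact Submodule.smul_mem_pointwise_smul _ _ _ trivial
  have hcot : (maximalIdeal A).toCotangent ⟨x, hx⟩ ≠ 0 := by
    rwa [Ne, Ideal.toCotangent_eq_zero]
  obtain ⟨φ, hφ⟩ := Module.Projective.exists_dual_eq_one (ResidueField A) hcot
  let ψ : maximalIdeal A →ₗ[A] ResidueField A :=
    φ.restrictScalars A ∘ₗ (maximalIdeal A).toCotangent
  let g : QuotSMulTop x (maximalIdeal A) →ₗ[A] ResidueField A :=
    Submodule.liftQ _ ψ fun y hy ↦ by
      obtain ⟨z, -, rfl⟩ := (Submodule.mem_smul_pointwise_iff_exists _ _ _).mp hy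
      rw [LinearMap.mem_ker, map_smul, Algebra.smul_def, ResidueField.algebraMap_eq,
        (residue_eq_zero_iff x).mpr hx, zero_mul]
  refine ⟨f, g, fun b ↦ ?_⟩
  obtain ⟨a, rfl⟩ := residue_surjective b
  have hf : f (residue A a) = a • Submodule.Quotient.mk ⟨x, hx⟩ := rfl
  have hg : g (Submodule.Quotient.mk ⟨x, hx⟩) = 1 := hφ
  rw [hf, map_smul, hg, Algebra.smul_def, mul_one, ResidueField.algebraMap_eq]

theorem hasProjectiveDimensionLE_residueField_quotient {x : A} (hx : x ∈ maximalIdeal A)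
    (hx2 : x ∉ maximalIdeal A ^ 2) [IsLocalRing (A ⧸ Ideal.span {x})] (k : ℕ)
    [HasProjectiveDimensionLE
      (ModuleCat.of (A ⧸ Ideal.span {x}) (QuotSMulTop x (maximalIdeal A))) k] :
    HasProjectiveDimensionLE
      (ModuleCat.of (A ⧸ Ideal.span {x}) (ResidueField (A ⧸ Ideal.span {x}))) k := by
  have hA : Function.Surjective (algebraMap A (A ⧸ Ideal.span {x})) :=
    Ideal.Quotient.mk_surjective
  have : IsLocalHom (algebraMap A (A ⧸ Ideal.span {x})) := .of_surjective _ hA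
  have hbij : Function.Bijective
      (Algebra.linearMap (ResidueField A) (ResidueField (A ⧸ Ideal.span {x}))) :=
    ⟨(algebraMap (ResidueField A) (ResidueField (A ⧸ Ideal.span {x}))).injective,
      .of_comp (g := residue A) (residue_surjective.comp hA)⟩
  let e := (LinearEquiv.ofBijective _ hbij).restrictScalars A
  obtain ⟨f, g, hgf⟩ := exists_leftInverse_residueField_quotSMulTop hx hx2
  refine hasProjectiveDimensionLE_of_leftInverse
    (f := (f ∘ₗ e.symm.toLinearMap).extendScalarsOfSurjective hA)
    (g := (e.toLinearMap ∘ₗ g).extendScalarsOfSurjective hA) (fun z ↦ ?_) k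
  exact (congrArg e (hgf (e.symm z))).trans (e.apply_symm_apply z)

variable [IsNoetherianRing A]

-- Syzygies in a minimal resolution have coordinates in `𝔪`, so `a` kills them: if free, they are
-- zero.
theorem free_of_hasProjectiveDimensionLE_of_mul_maximalIdeal_eq_zero {a : A} (ha : a ≠ 0)
    (ham : ∀ y ∈ maximalIdeal A, a * y = 0) (M : Type u) [AddCommGroup M] [Module A M]
    [Module.Finite A M] (k : ℕ) (hM : HasProjectiveDimensionLE (ModuleCat.of A M) k) :
    Module.Free A M := by
  induction k generalizing M with
  | zero =>
    have := hasProjectiveDimensionLE_zero_iff_projective.mp hM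
    have := Module.finitePresentation_of_finite A M
    exact Module.free_of_flat_of_isLocalRing
  | succ k ih =>
    obtain ⟨s, hsurj, hker⟩ := exists_finset_linearCombination_surjective_ker_le (A := A) M
    set π := Fintype.linearCombination A ((↑) : s → M)
    rw [hasProjectiveDimensionLE_succ_iff_of_exact π.ker.injective_subtype hsurj
      π.exact_subtype_ker_map] at hM
    have := ih π.ker hM
    have hkill : ∀ v : π.ker, a • v = 0 := fun v ↦
      Subtype.ext (funext fun i ↦ ham _ (hker v.1 v.2 i))
    have : Subsingleton π.ker := by
      by_contra hns
      have := not_subsingleton_iff_nontrivial.mp hns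
      have hann : Module.annihilator A π.ker = ⊥ := Module.annihilator_eq_bot.mpr inferInstance
      exact ha (Submodule.mem_bot A |>.mp (hann ▸ Module.mem_annihilator.mpr hkill))
    have hinj : Function.Injective π :=
      LinearMap.ker_eq_bot.mp (Submodule.subsingleton_iff_eq_bot.mp this)
    exact .of_equiv (LinearEquiv.ofBijective π ⟨hinj, hsurj⟩)

theorem exists_isSMulRegular_mem_maximalIdeal_notMem_sq (hA : ¬ IsField A)
    (hsocle : ∀ a : A, (∀ y ∈ maximalIdeal A, a * y = 0) → a = 0) :
    ∃ x ∈ maximalIdeal A, x ∉ maximalIdeal A ^ 2 ∧ IsSMulRegular A x := by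
  have hass : maximalIdeal A ∉ associatedPrimes A A := fun h ↦ by
    rw [AssociatedPrimes.mem_iff, isAssociatedPrime_iff] at h
    obtain ⟨hprime, a, ha⟩ := h
    refine hprime.ne_top ?_
    have ha0 : a = 0 := hsocle a fun y hy ↦ by
      rw [ha, Submodule.mem_colon_singleton] at hy
      rwa [mul_comm]
    simp [ha, ha0, Ideal.eq_top_iff_one, Submodule.mem_colon_singleton]
  obtain ⟨x, hx, hx2, hxP⟩ := exists_mem_maximalIdeal_notMem_sq_notMem hA
    (associatedPrimes.finite A A) (fun P hP ↦ hP.isPrime) hass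
  refine ⟨x, hx, hx2, ?_⟩
  have : x ∈ nonZeroDivisors A := by
    by_contra hcon
    have hcon : x ∈ (nonZeroDivisors A : Set A)ᶜ := hcon
    rw [← biUnion_associatedPrimes_eq_compl_nonZeroDivisors] at hcon
    obtain ⟨P, hP, hxP'⟩ := Set.mem_iUnion₂.mp hcon
    exact hxP P hP hxP'
  exact Module.Flat.isSMulRegular_of_nonZeroDivisors this

theorem isRegularLocalRing_of_hasProjectiveDimensionLE_residueField (k : ℕ)
    (h : HasProjectiveDimensionLE (ModuleCat.of A (ResidueField A)) k) :
    IsRegularLocalRing A := by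
  induction he : (maximalIdeal A).spanFinrank generalizing A with
  | zero =>
    refine .of_spanFinrank_maximalIdeal_le _ ?_
    rw [he]
    exact ringKrullDim_nonneg_of_nontrivial
  | succ e ih =>
    have hA : ¬ IsField A := by simp [isField_iff_spanFinrank_maximalIdeal_eq_zero, he]
    have hsocle : ∀ a : A, (∀ y ∈ maximalIdeal A, a * y = 0) → a = 0 := fun a ha ↦ by
      by_contra ha0
      have : Module.Free A (A ⧸ maximalIdeal A) :=
        free_of_hasProjectiveDimensionLE_of_mul_maximalIdeal_eq_zero ha0 ha (ResidueField A) k h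
      have hann : Module.annihilator A (A ⧸ maximalIdeal A) = ⊥ :=
        Module.annihilator_eq_bot.mpr (Module.Free.instFaithfulSMulOfNontrivial A _)
      rw [Ideal.annihilator_quotient] at hann
      exact hA (isField_iff_maximalIdeal_eq.mpr hann)
    obtain ⟨x, hx, hx2, hxA⟩ := exists_isSMulRegular_mem_maximalIdeal_notMem_sq hA hsocle
    have := isLocalRing_quotient ((Ideal.span_singleton_le_iff_mem _).mpr hx)
    have : HasProjectiveDimensionLE (ModuleCat.of A (maximalIdeal A)) k := by
      have h' : HasProjectiveDimensionLE (ModuleCat.of A (ResidueField A)) (k + 1) :=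
        hasProjectiveDimensionLT_of_ge _ (k + 1) (k + 2) (by lia)
      exact (hasProjectiveDimensionLE_succ_iff_of_exact
        (maximalIdeal A).injective_subtype (maximalIdeal A).mkQ_surjective
        (LinearMap.exact_subtype_mkQ _) k).mp h'
    have := (hasProjectiveDimensionLE_quotSMulTop_iff hx hxA k (hxA.submodule _ _)).mpr this
    have hk := hasProjectiveDimensionLE_residueField_quotient hx hx2 k
    have hrank := spanFinrank_maximalIdeal_quotient_span_singleton hx hx2
    have : IsRegularLocalRing (A ⧸ Ideal.span {x}) := ih hk (by lia)
    exact isRegularLocalRing_of_quotient hx hxA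

end SerreCriterion

section Localization

variable {R : Type u} [CommRing R] (S : Submonoid R)

theorem hasProjectiveDimensionLE_localizedModule_iff {M N : Type u} [AddCommGroup M] [Module R M]
    [AddCommGroup N] [Module R N] [Module (Localization S) N] [IsScalarTower R (Localization S) N]
    (f : M →ₗ[R] N) [IsLocalizedModule S f] (k : ℕ) :
    HasProjectiveDimensionLE ((ModuleCat.of R M).localizedModule S) k ↔
      HasProjectiveDimensionLE (ModuleCat.of (Localization S) N) k :=
  let e : (ModuleCat.of R M).localizedModule S ≃ₗ[Localization S] N :=
    (Shrink.linearEquiv (Localization S) (LocalizedModule S M)).trans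
      ((IsLocalizedModule.iso S f).extendScalarsOfIsLocalization S (Localization S))
  ⟨fun _ ↦ ModuleCat.hasProjectiveDimensionLE_of_linearEquiv (N := .of _ N) e k,
    fun _ ↦ ModuleCat.hasProjectiveDimensionLE_of_linearEquiv (M := .of _ N) e.symm k⟩

theorem hasProjectiveDimensionLE_localizedModule_quotient_iff (J : Ideal R) (k : ℕ) :
    HasProjectiveDimensionLE ((ModuleCat.of R (R ⧸ J)).localizedModule S) k ↔
      HasProjectiveDimensionLE (ModuleCat.of (Localization S)
        (Localization S ⧸ J.map (algebraMap R (Localization S)))) k := by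
  rw [← Ideal.localized'_eq_map (Localization S) S J]
  exact hasProjectiveDimensionLE_localizedModule_iff S
    (Submodule.toLocalizedQuotient' (Localization S) S (Algebra.linearMap R (Localization S)) J) k

theorem isRegularRing_of_isRegularLocalRing (A : Type u) [CommRing A] [IsRegularLocalRing A] :
    IsRegularRing A := isRegularRing_iff.mpr fun p hp ↦ by
  have := IsLocalization.isNoetherianRing p.primeCompl (Localization.AtPrime p) inferInstance
  have := hasProjectiveDimensionLE_spanFinrank_maximalIdeal (A := A) (A ⧸ p)
  have h := (hasProjectiveDimensionLE_localizedModule_quotient_iff p.primeCompl p _).mp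
    (ModuleCat.localizedModule_hasProjectiveDimensionLE (maximalIdeal A).spanFinrank _ _)
  rw [Localization.AtPrime.map_eq_maximalIdeal] at h
  exact isRegularLocalRing_of_hasProjectiveDimensionLE_residueField _ h

end Localization

/-! ### Completion and Chevalley's theorem -/

section Completion

theorem exists_ringHom_adicCompletion_comp_eq {P B : Type*} [CommRing P] [CommRing B]
    {V : Ideal P} {J : Ideal B} [IsAdicComplete J B] (φ : P →+* B) (hφ : V.map φ ≤ J) :
    ∃ F : AdicCompletion V P →+* B, F.comp (algebraMap P (AdicCompletion V P)) = φ := by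
  have hle (k : ℕ) : V ^ k ≤ (J ^ k).comap φ := by
    rw [← Ideal.map_le_iff_le_comap, Ideal.map_pow]
    exact Ideal.pow_right_mono hφ k
  let f (k : ℕ) : AdicCompletion V P →+* B ⧸ J ^ k :=
    (Ideal.quotientMap (J ^ k) φ (hle k)).comp
      (AdicCompletion.evalₐ V k : AdicCompletion V P →+* P ⧸ V ^ k)
  have hf {k l : ℕ} (hkl : k ≤ l) : (Ideal.Quotient.factorPow J hkl).comp (f l) = f k := by
    ext s
    obtain ⟨s, rfl⟩ := AdicCompletion.mk_surjective V P s
    simp only [f, RingHom.comp_apply, RingHom.coe_coe, AdicCompletion.evalₐ_mk,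
      Ideal.quotientMap_mk]
    exact congrArg (Ideal.quotientMap (J ^ k) φ (hle k))
      (AdicCompletion.Ideal.mk_eq_mk V hkl s)
  refine ⟨IsAdicComplete.liftRingHom J f hf, RingHom.ext fun p ↦
    (IsHausdorff.eq_iff_smodEq (I := J)).mpr fun n ↦ ?_⟩
  rw [smul_eq_mul, Ideal.mul_top, SModEq]
  refine (IsAdicComplete.mk_liftRingHom J f hf n _).trans ?_
  simp [f]

theorem surjective_of_surjective_mk_comp_algebraMap {P B : Type*} [CommRing P] [CommRing B]
    {V : Ideal P} (hV : V.FG) {J : Ideal B} [IsHausdorff J B] {φ : P →+* B} (hφ : V.map φ = J)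
    (hsurj : Function.Surjective ((Ideal.Quotient.mk J).comp φ))
    {F : AdicCompletion V P →+* B} (hF : F.comp (algebraMap P (AdicCompletion V P)) = φ) :
    Function.Surjective F := by
  have := AdicCompletion.isAdicComplete_self V hV
  have hmap : (V.map (algebraMap P (AdicCompletion V P))).map F = J := by
    rw [Ideal.map_map, hF, hφ]
  have : IsHausdorff ((V.map (algebraMap P (AdicCompletion V P))).map F) B := hmap ▸ inferInstance
  refine surjective_of_mk_map_comp_surjective (I := V.map (algebraMap P (AdicCompletion V P))) F ?_
  rw [hmap]
  refine .of_comp (g := algebraMap P (AdicCompletion V P)) ?_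
  rw [← RingHom.coe_comp, RingHom.comp_assoc, hF]
  exact hsurj

-- `B` is a quotient of a power series ring over `A`, the completion of a polynomial ring at its
-- variables.
theorem isNoetherianRing_of_isAdicComplete {A B : Type*} [CommRing A] [IsNoetherianRing A]
    [CommRing B] [Algebra A B] (J : Ideal B) (hJ : J.FG) [IsAdicComplete J B]
    (hAB : Function.Surjective ((Ideal.Quotient.mk J).comp (algebraMap A B))) :
    IsNoetherianRing B := by
  obtain ⟨n, g, hg⟩ := Submodule.fg_iff_exists_fin_generating_family.mp hJ
  let φ : MvPolynomial (Fin n) A →+* B := MvPolynomial.eval₂Hom (algebraMap A B) g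
  have hφ : (MvPolynomial.idealOfVars (Fin n) A).map φ = J := by
    simp only [MvPolynomial.idealOfVars, Ideal.map_span, ← Set.range_comp, ← hg]
    exact congrArg (Ideal.span ∘ Set.range) (funext (MvPolynomial.eval₂Hom_X' _ g))
  have hsurj : Function.Surjective ((Ideal.Quotient.mk J).comp φ) := by
    refine .of_comp (g := MvPolynomial.C) ?_
    rwa [← RingHom.coe_comp, RingHom.comp_assoc, MvPolynomial.eval₂Hom_comp_C]
  obtain ⟨F, hF⟩ := exists_ringHom_adicCompletion_comp_eq φ hφ.le
  have := isNoetherianRing_of_ringEquiv _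
    (MvPowerSeries.toAdicCompletionAlgEquiv (Fin n) A).toRingEquiv
  exact isNoetherianRing_of_surjective _ B F
    (surjective_of_surjective_mk_comp_algebraMap (MvPolynomial.idealOfVars_fg _ _) hφ hsurj hF)

theorem isNoetherianRing_adicCompletion {A : Type*} [CommRing A] [IsNoetherianRing A]
    (I : Ideal A) : IsNoetherianRing (AdicCompletion I A) := by
  have hI := IsNoetherian.noetherian I
  have := AdicCompletion.isAdicComplete_self I hI
  refine isNoetherianRing_of_isAdicComplete (A := A) (I.map (algebraMap A _)) (Ideal.FG.map hI _) ?_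
  intro y
  obtain ⟨y, rfl⟩ := Ideal.Quotient.mk_surjective y
  obtain ⟨a, ha⟩ := Ideal.Quotient.mk_surjective (AdicCompletion.evalOneₐ I y)
  refine ⟨a, Ideal.Quotient.eq.mpr ?_⟩
  rw [← AdicCompletion.ker_evalOneₐ_eq_map I hI, RingHom.mem_ker, map_sub, sub_eq_zero]
  exact ha

theorem isRegularLocalRing_adicCompletion (A : Type*) [CommRing A] [IsRegularLocalRing A] :
    IsRegularLocalRing (AdicCompletion (maximalIdeal A) A) := by
  have := isNoetherianRing_adicCompletion (maximalIdeal A)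
  refine .of_spanFinrank_maximalIdeal_le _ ?_
  rw [AdicCompletion.spanFinrank_maximalIdeal_eq, IsRegularLocalRing.spanFinrank_maximalIdeal,
    ← maximalIdeal_height_eq_ringKrullDim, ← maximalIdeal_height_eq_ringKrullDim,
    Ideal.height_eq_height_add_of_liesOver_of_hasGoingDown (maximalIdeal A)
      (maximalIdeal (AdicCompletion (maximalIdeal A) A))]
  exact_mod_cast le_self_add

end Completion

section Chevalley

variable {B : Type*} [CommRing B]

theorem exists_sub_mem_pow_forall_mem_sup_pow {I : Ideal B} [IsPrecomplete I B]
    {L : ℕ → Ideal B} {k : ℕ} (hL : ∀ l, L l ≤ L (l + 1) ⊔ I ^ (k + l))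
    {x : B} (hx : x ∈ L 0) : ∃ y, y - x ∈ I ^ k ∧ ∀ l, y ∈ L l ⊔ I ^ (k + l) := by
  have hstep (l : ℕ) (z : L l) : ∃ w : L (l + 1), (z : B) - w ∈ I ^ (k + l) := by
    obtain ⟨a, ha, b, hb, hab⟩ := Submodule.mem_sup.mp (hL l z.2)
    exact ⟨⟨a, ha⟩, by simpa [← hab] using hb⟩
  choose next hnext using hstep
  obtain ⟨X, hX, hX₀, hXsucc⟩ : ∃ X : ℕ → B, (∀ l, X l ∈ L l) ∧ X 0 = x ∧
      ∀ l, X l - X (l + 1) ∈ I ^ (k + l) :=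
    let X (l : ℕ) : L l := Nat.rec ⟨x, hx⟩ next l
    ⟨fun l : ℕ ↦ (X l).1, fun l ↦ (X l).2, rfl, fun l ↦ hnext l (X l)⟩
  have hcauchy : AdicCompletion.IsAdicCauchy I B fun n ↦ X (n - k) := by
    rw [AdicCompletion.isAdicCauchy_iff]
    intro n
    rw [SModEq.sub_mem, smul_eq_mul, Ideal.mul_top]
    obtain hn | hn := lt_or_ge n k
    · simp [Nat.sub_eq_zero_of_le (Nat.succ_le_of_lt hn), Nat.sub_eq_zero_of_le hn.le]
    · obtain ⟨l, rfl⟩ := Nat.exists_eq_add_of_le hn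
      simpa [add_assoc] using hXsucc l
  obtain ⟨y, hy⟩ := IsPrecomplete.prec' (I := I) _ hcauchy
  have hyX (l : ℕ) : X l - y ∈ I ^ (k + l) := by
    simpa [SModEq.sub_mem] using hy (k + l)
  refine ⟨y, ?_, fun l ↦ ?_⟩
  · simpa [hX₀] using neg_mem (hyX 0)
  · rw [← sub_sub_cancel (X l) y]
    exact sub_mem (Ideal.mem_sup_left (hX l)) (Ideal.mem_sup_right (hyX l))

variable [IsLocalRing B] [IsNoetherianRing B]

theorem exists_forall_le_sup_maximalIdeal_pow {J : ℕ → Ideal B} (hJ : Antitone J) (k : ℕ) :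
    ∃ j, ∀ i, J j ≤ J i ⊔ maximalIdeal B ^ k := by
  obtain rfl | hk := eq_or_ne k 0
  · exact ⟨0, fun i ↦ by simp⟩
  have hmin : maximalIdeal B ∈ (maximalIdeal B ^ k).minimalPrimes := by
    rw [← Ideal.radical_minimalPrimes, Ideal.radical_pow _ hk, Ideal.IsPrime.radical inferInstance,
      Ideal.minimalPrimes_eq_subsingleton_self]
    rfl
  have := quotient_artinian_of_mem_minimalPrimes_of_isLocalRing _ hmin
  set q := Ideal.Quotient.mk (maximalIdeal B ^ k)
  obtain ⟨j, hj⟩ := IsArtinian.monotone_stabilizes (R := B ⧸ maximalIdeal B ^ k)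
    ⟨fun j ↦ OrderDual.toDual ((J j).map q), fun _ _ h ↦ Ideal.map_mono (hJ h)⟩
  have hstab (i : ℕ) (hi : j ≤ i) : J j ≤ J i ⊔ maximalIdeal B ^ k := by
    have h : (J j).map q = (J i).map q := hj i hi
    rw [sup_comm, ← Ideal.comap_map_quotientMk, ← Ideal.map_le_iff_le_comap]
    exact h.le
  refine ⟨j, fun i ↦ ?_⟩
  obtain hij | hij := le_total j i
  · exact hstab i hij
  · exact (hJ hij).trans le_sup_left

theorem iInf_sup_maximalIdeal_pow_le (J : Ideal B) :
    ⨅ k, J ⊔ maximalIdeal B ^ k ≤ J := fun x hx ↦ by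
  rw [← Ideal.Quotient.eq_zero_iff_mem]
  refine IsHausdorff.haus (I := maximalIdeal B) inferInstance _ fun k ↦ ?_
  obtain ⟨a, ha, b, hb, rfl⟩ := Submodule.mem_sup.mp ((Submodule.mem_iInf _).mp hx k)
  rw [SModEq.zero, map_add, Ideal.Quotient.eq_zero_iff_mem.mpr ha, zero_add]
  simpa [Algebra.smul_def] using
    Submodule.smul_mem_smul hb (Submodule.mem_top (x := (1 : B ⧸ J)))

theorem iInf_sup_maximalIdeal_pow [IsAdicComplete (maximalIdeal B) B] {J : ℕ → Ideal B}
    (hJ : Antitone J) (k : ℕ) :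
    ⨅ j, J j ⊔ maximalIdeal B ^ k = (⨅ j, J j) ⊔ maximalIdeal B ^ k := by
  refine le_antisymm (fun x hx ↦ ?_)
    (sup_le (iInf_mono fun _ ↦ le_sup_left) (le_iInf fun _ ↦ le_sup_right))
  let L (l : ℕ) : Ideal B := ⨅ j, J j ⊔ maximalIdeal B ^ (k + l)
  have hL (l : ℕ) : L l ≤ L (l + 1) ⊔ maximalIdeal B ^ (k + l) := by
    obtain ⟨j, hj⟩ := exists_forall_le_sup_maximalIdeal_pow hJ (k + (l + 1))
    exact (iInf_le _ j).trans (sup_le_sup_right (le_iInf hj) _)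
  obtain ⟨y, hyx, hy⟩ := exists_sub_mem_pow_forall_mem_sup_pow hL hx
  have hyJ : y ∈ ⨅ j, J j := by
    refine (Submodule.mem_iInf _).mpr fun j ↦ iInf_sup_maximalIdeal_pow_le _ ?_
    refine (Submodule.mem_iInf _).mpr fun l ↦ ?_
    have hpow : maximalIdeal B ^ (k + l) ≤ maximalIdeal B ^ l :=
      Ideal.pow_le_pow_right (Nat.le_add_left l k)
    exact sup_le ((iInf_le _ j).trans (sup_le_sup_left hpow _)) (le_sup_of_le_right hpow) (hy l)
  rw [← sub_sub_cancel y x]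
  exact sub_mem (Ideal.mem_sup_left hyJ) (Ideal.mem_sup_right hyx)

theorem exists_le_maximalIdeal_pow [IsAdicComplete (maximalIdeal B) B] {J : ℕ → Ideal B}
    (hJ : Antitone J) (hbot : ⨅ j, J j = ⊥) (k : ℕ) : ∃ j, J j ≤ maximalIdeal B ^ k := by
  obtain ⟨j, hj⟩ := exists_forall_le_sup_maximalIdeal_pow hJ k
  refine ⟨j, (le_iInf hj).trans_eq ?_⟩
  rw [iInf_sup_maximalIdeal_pow hJ, hbot, bot_sup_eq]

-- Chevalley's theorem applied to the symbolic powers of `q`, whose intersection is zero.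
theorem exists_forall_mul_mem_pow_imp_mem_maximalIdeal_pow_of_isAdicComplete [IsDomain B]
    [IsAdicComplete (maximalIdeal B) B] (q : Ideal B) [q.IsPrime] (k : ℕ) :
    ∃ j, ∀ s ∉ q, ∀ x, s * x ∈ q ^ j → x ∈ maximalIdeal B ^ k := by
  let S := Localization.AtPrime q
  have hinj : Function.Injective (algebraMap B S) :=
    IsLocalization.injective S q.primeCompl_le_nonZeroDivisors
  have : IsNoetherianRing S := IsLocalization.isNoetherianRing q.primeCompl S inferInstance
  obtain ⟨j, hj⟩ := exists_le_maximalIdeal_pow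
    (J := fun j ↦ (maximalIdeal S ^ j).comap (algebraMap B S))
    (fun _ _ h ↦ Ideal.comap_mono (Ideal.pow_le_pow_right h))
    (by rw [← Ideal.comap_iInf, Ideal.iInf_pow_eq_bot_of_isLocalRing _ Ideal.IsPrime.ne_top',
      ← RingHom.ker_eq_comap_bot, (RingHom.injective_iff_ker_eq_bot _).mp hinj]) k
  refine ⟨j, fun s hs x hx ↦ hj ?_⟩
  have hunit : IsUnit (algebraMap B S s) := IsLocalization.map_units S (⟨s, hs⟩ : q.primeCompl)
  rw [Ideal.mem_comap, ← Ideal.unit_mul_mem_iff_mem _ hunit, ← map_mul,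
    ← Localization.AtPrime.map_eq_maximalIdeal, ← Ideal.map_pow]
  exact Ideal.mem_map_of_mem _ hx

theorem exists_forall_mul_mem_pow_imp_mem_maximalIdeal_pow {A : Type*} [CommRing A]
    [IsRegularLocalRing A] (q : Ideal A) [q.IsPrime] (k : ℕ) :
    ∃ j, ∀ s ∉ q, ∀ x, s * x ∈ q ^ j → x ∈ maximalIdeal A ^ k := by
  have := isRegularLocalRing_adicCompletion A
  have := isDomain_of_isRegularLocalRing (AdicCompletion (maximalIdeal A) A)
  set f := algebraMap A (AdicCompletion (maximalIdeal A) A)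
  have : Module.FaithfullyFlat A (AdicCompletion (maximalIdeal A) A) :=
    Module.FaithfullyFlat.of_flat_of_isLocalHom
  obtain ⟨⟨Q, hQ⟩, hQq⟩ := PrimeSpectrum.comap_surjective_of_faithfullyFlat (A := A)
    (B := AdicCompletion (maximalIdeal A) A) ⟨q, inferInstance⟩
  have hQq : Q.comap f = q := congrArg PrimeSpectrum.asIdeal hQq
  obtain ⟨j, hj⟩ := exists_forall_mul_mem_pow_imp_mem_maximalIdeal_pow_of_isAdicComplete Q k
  refine ⟨j, fun s hs x hx ↦ ?_⟩
  have hfx : f s * f x ∈ Q ^ j := by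
    rw [← map_mul]
    refine Ideal.pow_right_mono (Ideal.map_le_iff_le_comap.mpr hQq.ge) j ?_
    rw [← Ideal.map_pow]
    exact Ideal.mem_map_of_mem f hx
  have hx : f x ∈ maximalIdeal (AdicCompletion (maximalIdeal A) A) ^ k :=
    hj (f s) (fun h ↦ hs (hQq ▸ h)) (f x) hfx
  rwa [AdicCompletion.maximalIdeal_eq_map, ← Ideal.map_pow, ← Ideal.mem_comap,
    Ideal.comap_map_eq_self_of_faithfullyFlat] at hx

end Chevalley

/-! ### Saturation of powers of an ideal -/

section Saturation

variable {A : Type u} [CommRing A]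

/-- The saturation `J : 𝔞^∞` of an ideal `J` with respect to an ideal `𝔞`: the elements annihilated
modulo `J` by some power of `𝔞`. -/
def saturation (𝔞 J : Ideal A) : Ideal A :=
  ⨆ k, J.colon (𝔞 ^ k : Ideal A)

theorem monotone_colon_pow (𝔞 J : Ideal A) : Monotone fun k ↦ J.colon (𝔞 ^ k : Ideal A) :=
  fun _ _ h ↦ Submodule.colon_mono le_rfl (Ideal.pow_le_pow_right h)

theorem mem_saturation_iff {𝔞 J : Ideal A} {x : A} :
    x ∈ saturation 𝔞 J ↔ ∃ k, ∀ y ∈ 𝔞 ^ k, x * y ∈ J := by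
  rw [saturation, Submodule.mem_iSup_of_directed _ (monotone_colon_pow 𝔞 J).directed_le]
  simp only [Submodule.mem_colon, SetLike.mem_coe, smul_eq_mul]

theorem saturation_mono (𝔞 : Ideal A) : Monotone (saturation 𝔞) :=
  fun _ _ h ↦ iSup_mono fun _ ↦ Submodule.colon_mono h subset_rfl

theorem le_saturation (𝔞 J : Ideal A) : J ≤ saturation 𝔞 J :=
  Ideal.le_colon.trans (le_iSup (fun k ↦ J.colon (𝔞 ^ k : Ideal A)) 0)

theorem exists_pow_mul_saturation_le [IsNoetherianRing A] (𝔞 J : Ideal A) :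
    ∃ k, 𝔞 ^ k * saturation 𝔞 J ≤ J := by
  obtain ⟨k, hk⟩ : ∃ k, saturation 𝔞 J = J.colon (𝔞 ^ k : Ideal A) :=
    ⟨_, WellFoundedGT.iSup_eq_monotonicSequenceLimit ⟨_, monotone_colon_pow 𝔞 J⟩⟩
  refine ⟨k, Ideal.mul_le.mpr fun y hy x hx ↦ ?_⟩
  rw [mul_comm]
  exact Submodule.mem_colon.mp (hk.le hx) y hy

theorem mem_saturation_of_forall_mul_mem [IsNoetherianRing A] {𝔞 J : Ideal A} {x : A}
    (hx : ∀ y ∈ 𝔞, y * x ∈ saturation 𝔞 J) : x ∈ saturation 𝔞 J := by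
  obtain ⟨k, hk⟩ := exists_pow_mul_saturation_le 𝔞 J
  refine mem_saturation_iff.mpr ⟨k + 1, fun z hz ↦ ?_⟩
  rw [mul_comm]
  have hle : 𝔞 ^ (k + 1) * Ideal.span {x} ≤ J := by
    rw [pow_succ, mul_assoc]
    refine (Ideal.mul_mono_right (Ideal.mul_le.mpr fun y hy w hw ↦ ?_)).trans hk
    obtain ⟨a, rfl⟩ := Ideal.mem_span_singleton'.mp hw
    rw [mul_left_comm]
    exact Ideal.mul_mem_left _ a (hx y hy)
  exact hle (Ideal.mul_mem_mul hz (Ideal.mem_span_singleton_self x))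

theorem exists_mem_isSMulRegular_quotient_saturation [IsNoetherianRing A] (𝔞 J : Ideal A) :
    ∃ x ∈ 𝔞, IsSMulRegular (A ⧸ saturation 𝔞 J) x := by
  suffices Subsingleton (A ⧸ 𝔞 →ₗ[A] A ⧸ saturation 𝔞 J) by
    obtain ⟨x, hx, hreg⟩ := IsSMulRegular.subsingleton_linearMap_iff.mp this
    exact ⟨x, Ideal.annihilator_quotient.le hx, hreg⟩
  refine subsingleton_of_forall_eq 0 fun f ↦ Submodule.linearMap_qext _ (LinearMap.ext_ring ?_)
  obtain ⟨x, hx⟩ := Ideal.Quotient.mk_surjective (f 1)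
  refine hx.symm.trans (Ideal.Quotient.eq_zero_iff_mem.mpr ?_)
  refine mem_saturation_of_forall_mul_mem fun y hy ↦ Ideal.Quotient.eq_zero_iff_mem.mp ?_
  rw [map_mul, hx, ← Ideal.Quotient.algebraMap_eq, ← Algebra.smul_def, ← map_smul,
    Algebra.smul_def, mul_one, Ideal.Quotient.algebraMap_eq, Ideal.Quotient.eq_zero_iff_mem.mpr hy,
    map_zero]

variable [IsRegularLocalRing A]

theorem hasProjectiveDimensionLE_quotient_saturation {k : ℕ}
    (hk : (maximalIdeal A).spanFinrank ≤ k + 1) (J : Ideal A) :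
    HasProjectiveDimensionLE (ModuleCat.of A (A ⧸ saturation (maximalIdeal A) J)) k := by
  obtain ⟨x, hx, hreg⟩ := exists_mem_isSMulRegular_quotient_saturation (maximalIdeal A) J
  have hpd := hasProjectiveDimensionLE_spanFinrank_maximalIdeal
    (A := A) (QuotSMulTop x (A ⧸ saturation (maximalIdeal A) J))
  rw [← projectiveDimension_le_iff,
    ModuleCat.projectiveDimension_quotSMulTop_eq_succ_of_isSMulRegular
      (ModuleCat.of A (A ⧸ saturation (maximalIdeal A) J)) x hreg hx] at hpd
  rw [← projectiveDimension_le_iff, ← ENat.WithBot.add_le_add_one_right_iff]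
  exact hpd.trans (mod_cast hk)

-- Some element of `𝔪` is not in `q`, so the saturation of `I ^ j` lies in the `j`-th symbolic power
-- of `q`. Artin–Rees controls the intersection of the saturation of `I ^ t` with a high power
-- of `𝔪`.
theorem exists_saturation_pow_le {I q : Ideal A} [q.IsPrime] (hIq : I ≤ q)
    (hq : q ≠ maximalIdeal A) (t : ℕ) :
    ∃ t' ≥ t, saturation (maximalIdeal A) (I ^ t') ≤ I ^ t := by
  obtain ⟨k, hk⟩ := exists_pow_mul_saturation_le (maximalIdeal A) (I ^ t)
  obtain ⟨c, hc⟩ := Ideal.exists_pow_inf_eq_pow_smul (maximalIdeal A)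
    (saturation (maximalIdeal A) (I ^ t))
  obtain ⟨j, hj⟩ := exists_forall_mul_mem_pow_imp_mem_maximalIdeal_pow q (c + k)
  obtain ⟨y, hy, hyq⟩ :=
    SetLike.exists_of_lt ((le_maximalIdeal Ideal.IsPrime.ne_top').lt_of_ne hq)
  refine ⟨max t j, le_max_left _ _, fun x hx ↦ ?_⟩
  have hxt : x ∈ saturation (maximalIdeal A) (I ^ t) :=
    saturation_mono _ (Ideal.pow_le_pow_right (le_max_left _ _)) hx
  have hxm : x ∈ maximalIdeal A ^ (c + k) := by
    obtain ⟨l, hl⟩ := mem_saturation_iff.mp hx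
    refine hj (y ^ l) (fun h ↦ hyq (Ideal.IsPrime.mem_of_pow_mem ‹_› l h)) x ?_
    rw [mul_comm]
    exact Ideal.pow_right_mono hIq j
      (Ideal.pow_le_pow_right (le_max_right t j) (hl _ (Ideal.pow_mem_pow hy l)))
  have hmem : x ∈ maximalIdeal A ^ (c + k) • ⊤ ⊓ saturation (maximalIdeal A) (I ^ t) :=
    ⟨by simpa using hxm, hxt⟩
  rw [hc (c + k) (Nat.le_add_right c k), Nat.add_sub_cancel_left] at hmem
  exact hk (Ideal.mul_mono_right inf_le_right hmem)

theorem exists_pow_le_le_pow_hasProjectiveDimensionLE_quotient {k : ℕ}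
    (hk : (maximalIdeal A).spanFinrank ≤ k + 1) {I : Ideal A}
    (hI : (maximalIdeal A).spanFinrank = k + 1 → maximalIdeal A ∉ I.minimalPrimes) (t : ℕ) :
    ∃ t' ≥ t, ∃ J : Ideal A, I ^ t' ≤ J ∧ J ≤ I ^ t ∧
      HasProjectiveDimensionLE (ModuleCat.of A (A ⧸ J)) k := by
  rcases hk.lt_or_eq with hlt | heq
  · have := hasProjectiveDimensionLE_spanFinrank_maximalIdeal (A := A) (A ⧸ I ^ t)
    exact ⟨t, le_rfl, I ^ t, le_rfl, le_rfl,
      hasProjectiveDimensionLT_of_ge _ ((maximalIdeal A).spanFinrank + 1) (k + 1) hlt⟩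
  · obtain ⟨t', ht', hle⟩ : ∃ t' ≥ t, saturation (maximalIdeal A) (I ^ t') ≤ I ^ t := by
      rcases eq_or_ne I ⊤ with rfl | hne
      · exact ⟨t, le_rfl, (Ideal.top_pow A t).symm ▸ le_top⟩
      obtain ⟨q, hq⟩ := Ideal.nonempty_minimalPrimes hne
      have := hq.1.1
      exact exists_saturation_pow_le hq.1.2 (fun h ↦ hI heq (h ▸ hq)) t
    exact ⟨t', ht', _, le_saturation _ _, hle, hasProjectiveDimensionLE_quotient_saturation hk _⟩

end Saturation

/-! ### Vanishing of transition maps on `Ext` -/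

section ExtAnnihilator

variable {R : Type u} [CommRing R]

theorem mul_smul_mk₀_comp_eq_zero {X Y Z N : ModuleCat.{u} R} {n : ℕ} {r s : R} {f : X ⟶ Z}
    {g : X ⟶ Y} {h : Y ⟶ Z} (hr : r • f = g ≫ h) (hs : ∀ e : Abelian.Ext Y N n, s • e = 0)
    (e : Abelian.Ext Z N n) : (s * r) • (Abelian.Ext.mk₀ f).comp e (zero_add n) = 0 := by
  rw [mul_smul, ← Abelian.Ext.smul_comp, ← Abelian.Ext.mk₀_smul, hr,
    ← Abelian.Ext.mk₀_comp_mk₀_assoc, ← Abelian.Ext.comp_smul, hs, Abelian.Ext.comp_zero]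

variable (S : Submonoid R)

theorem exists_comp_eq_smul_id {M F : Type u} [AddCommGroup M] [Module R M]
    [Module.FinitePresentation R M] [AddCommGroup F] [Module R F] {π : F →ₗ[R] M}
    (hπ : Function.Surjective π)
    (hM : Module.Projective (Localization S) (LocalizedModule S M)) :
    ∃ s ∈ S, ∃ ψ : M →ₗ[R] F, π ∘ₗ ψ = s • LinearMap.id := by
  let toLoc (L : Type u) [AddCommGroup L] [Module R L] := LocalizedModule.mkLinearMap S L
  obtain ⟨σ, hσ⟩ := Module.projective_lifting_property (LocalizedModule.map S π)
    LinearMap.id (LocalizedModule.map_surjective _ _ hπ)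
  obtain ⟨ψ, s, hψ⟩ := Module.FinitePresentation.exists_lift_of_isLocalizedModule S
    (toLoc F) (σ.restrictScalars R ∘ₗ toLoc M)
  have hloc : toLoc M ∘ₗ (π ∘ₗ ψ) = toLoc M ∘ₗ (s • LinearMap.id) := by
    ext m
    calc toLoc M (π (ψ m)) = LocalizedModule.map S π (toLoc F (ψ m)) := by simp [toLoc]
      _ = LocalizedModule.map S π (s.1 • σ (toLoc M m)) :=
        congrArg _ (LinearMap.congr_fun hψ m)
      _ = s.1 • toLoc M m := by
        rw [LinearMap.map_smul_of_tower]
        exact congrArg _ (LinearMap.congr_fun hσ _)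
      _ = toLoc M (s.1 • m) := ((toLoc M).map_smul s.1 m).symm
  obtain ⟨s', hs'⟩ := Module.Finite.exists_smul_of_comp_eq_of_isLocalizedModule S
    (toLoc M) _ _ hloc
  refine ⟨s' * s, mul_mem s'.2 s.2, s'.1 • ψ, ?_⟩
  rw [LinearMap.comp_smul, mul_smul]
  exact hs'

variable [IsNoetherianRing R]

theorem exists_smul_ext_eq_zero_of_hasProjectiveDimensionLE {k : ℕ} {M : Type u} [AddCommGroup M]
    [Module R M] [Module.Finite R M]
    (hM : HasProjectiveDimensionLE (ModuleCat.of (Localization S) (LocalizedModule S M)) k)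
    (N : ModuleCat.{u} R) :
    ∃ s ∈ S, ∀ e : Abelian.Ext (ModuleCat.of R M) N (k + 1), s • e = 0 := by
  induction k generalizing M with
  | zero =>
    obtain ⟨n, π, hπ⟩ := Module.Finite.exists_fin' R M
    have := Module.finitePresentation_of_finite R M
    obtain ⟨s, hs, ψ, hψ⟩ := exists_comp_eq_smul_id S hπ
      (hasProjectiveDimensionLE_zero_iff_projective.1 hM)
    have hfac : s • 𝟙 (ModuleCat.of R M) = ModuleCat.ofHom ψ ≫ ModuleCat.ofHom π := by
      rw [← ModuleCat.ofHom_comp, hψ]; rfl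
    have hfree : Projective (ModuleCat.of R (Fin n → R)) :=
      (IsProjective.iff_projective (R := R) (Fin n → R)).mp inferInstance
    refine ⟨s, hs, fun e ↦ ?_⟩
    simpa using mul_smul_mk₀_comp_eq_zero (s := 1) hfac
      (fun e' ↦ by rw [Abelian.Ext.eq_zero_of_projective e', smul_zero]) e
  | succ k ih =>
    obtain ⟨n, π, hπ⟩ := Module.Finite.exists_fin' R M
    have hses : π.shortComplexKer.ShortExact := LinearMap.shortExact_shortComplexKer hπ
    have hfree : Projective π.shortComplexKer.X₂ :=
      (IsProjective.iff_projective (R := R) (Fin n → R)).mp inferInstance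
    obtain ⟨s, hs, hs0⟩ := ih (M := LinearMap.ker π) <|
      (hasProjectiveDimensionLE_succ_iff_of_exact (F := LocalizedModule S (Fin n → R))
        (LocalizedModule.map_injective S _ (Submodule.injective_subtype (LinearMap.ker π)))
        (LocalizedModule.map_surjective S _ hπ)
        (LocalizedModule.map_exact S _ _ (LinearMap.exact_subtype_ker_map π)) k).1 hM
    refine ⟨s, hs, fun e ↦ ?_⟩
    obtain ⟨e', rfl⟩ := Abelian.Ext.contravariant_sequence_exact₃ hses (Y := N) e
      (Abelian.Ext.eq_zero_of_projective (P := π.shortComplexKer.X₂) _) (add_comm 1 (k + 1))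
    have he' : s • e' = 0 := hs0 e'
    rw [← Abelian.Ext.comp_smul, he', Abelian.Ext.comp_zero]

end ExtAnnihilator

section Transition

variable {R : Type u} [CommRing R]

/-- The transition map `R ⧸ I ^ t' ⟶ R ⧸ I ^ t` of the inverse system whose `Ext` modules have
local cohomology as colimit, written as in `localCohomology.idealPowersDiagram`. -/
abbrev quotientPowMap (I : Ideal R) {t t' : ℕ} (h : t ≤ t') :
    ModuleCat.of R (R ⧸ I ^ t') ⟶ ModuleCat.of R (R ⧸ I ^ t) :=
  ModuleCat.ofHom (Submodule.mapQ (I ^ t') (I ^ t) LinearMap.id (Ideal.pow_le_pow_right h))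

variable [IsNoetherianRing R]

theorem exists_mem_forall_mul_mem_of_map_le {S : Submonoid R} {J K : Ideal R}
    (h : J.map (algebraMap R (Localization S)) ≤ K.map (algebraMap R (Localization S))) :
    ∃ s ∈ S, ∀ x ∈ J, s * x ∈ K := by
  let f : J →ₗ[R] R ⧸ K := K.mkQ ∘ₗ J.subtype
  have hf : LocalizedModule.mkLinearMap S (R ⧸ K) ∘ₗ f =
      LocalizedModule.mkLinearMap S (R ⧸ K) ∘ₗ 0 := LinearMap.ext fun x ↦ by
    obtain ⟨s, hs, hsx⟩ := (IsLocalization.algebraMap_mem_map_algebraMap_iff S _ _ _).mp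
      (h (Ideal.mem_map_of_mem _ x.2))
    rw [LinearMap.comp_zero, LinearMap.zero_apply, LinearMap.comp_apply,
      IsLocalizedModule.eq_zero_iff S]
    exact ⟨⟨s, hs⟩, (Submodule.Quotient.mk_eq_zero K).mpr hsx⟩
  obtain ⟨s, hs⟩ := Module.Finite.exists_smul_of_comp_eq_of_isLocalizedModule S _ f 0 hf
  exact ⟨s, s.2, fun x hx ↦ (Submodule.Quotient.mk_eq_zero K).mp
    ((LinearMap.congr_fun hs ⟨x, hx⟩).trans (smul_zero s))⟩

theorem exists_smul_mk₀_quotientPowMap_comp_eq_zero {S : Submonoid R} {I : Ideal R} {t t' k : ℕ}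
    (htt' : t ≤ t') {J : Ideal (Localization S)}
    (hIJ : (I ^ t').map (algebraMap R (Localization S)) ≤ J)
    (hJI : J ≤ (I ^ t).map (algebraMap R (Localization S)))
    (hJ : HasProjectiveDimensionLE (ModuleCat.of (Localization S) (Localization S ⧸ J)) k)
    (N : ModuleCat.{u} R) :
    ∃ s ∈ S, ∀ e : Abelian.Ext (ModuleCat.of R (R ⧸ I ^ t)) N (k + 1),
      s • (Abelian.Ext.mk₀ (quotientPowMap I htt')).comp e (zero_add (k + 1)) = 0 := by
  let T : Ideal R := J.under R
  have hTJ : T.map (algebraMap R (Localization S)) = J := IsLocalization.map_under S _ J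
  have hIT : I ^ t' ≤ T := Ideal.map_le_iff_le_comap.mp hIJ
  obtain ⟨r, hr, hrT⟩ := exists_mem_forall_mul_mem_of_map_le (hTJ.trans_le hJI)
  rw [← hTJ, ← hasProjectiveDimensionLE_localizedModule_quotient_iff,
    hasProjectiveDimensionLE_localizedModule_iff S (LocalizedModule.mkLinearMap S (R ⧸ T))] at hJ
  obtain ⟨s, hs, hs0⟩ := exists_smul_ext_eq_zero_of_hasProjectiveDimensionLE S hJ N
  have hfac : r • quotientPowMap I htt' =
      ModuleCat.ofHom (Submodule.mapQ (I ^ t') T LinearMap.id hIT) ≫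
        ModuleCat.ofHom (Submodule.mapQ T (I ^ t) (r • LinearMap.id) fun x hx ↦ by
          simpa using hrT x hx) :=
    ModuleCat.hom_ext (Submodule.linearMap_qext _ rfl)
  exact ⟨s * r, mul_mem hs hr, mul_smul_mk₀_comp_eq_zero hfac hs0⟩

theorem exists_smul_mk₀_quotientPowMap_comp_eq_zero_of_height_le (p : Ideal R) [p.IsPrime]
    [IsRegularLocalRing (Localization.AtPrime p)] {k : ℕ} (hp : p.height ≤ k + 1) {I : Ideal R}
    (hI : p.height = k + 1 → p ∉ I.minimalPrimes) (N : ModuleCat.{u} R) (t : ℕ) :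
    ∃ (t' : ℕ) (htt' : t ≤ t'), ∃ s ∉ p,
      ∀ e : Abelian.Ext (ModuleCat.of R (R ⧸ I ^ t)) N (k + 1),
        s • (Abelian.Ext.mk₀ (quotientPowMap I htt')).comp e (zero_add (k + 1)) = 0 := by
  have hrank : ((maximalIdeal (Localization.AtPrime p)).spanFinrank : ℕ∞) = p.height := by
    rw [← WithBot.coe_inj,
      ← IsLocalization.AtPrime.ringKrullDim_eq_height p (Localization.AtPrime p)]
    exact IsRegularLocalRing.spanFinrank_maximalIdeal
  rw [← hrank] at hp hI
  obtain ⟨t', htt', J, hIJ, hJI, hJ⟩ := exists_pow_le_le_pow_hasProjectiveDimensionLE_quotient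
    (k := k) (mod_cast hp) (I := I.map (algebraMap R (Localization.AtPrime p)))
    (fun h hmem ↦ hI (mod_cast h) <| by
      rwa [IsLocalization.minimalPrimes_map p.primeCompl, Set.mem_preimage,
        Localization.AtPrime.under_maximalIdeal] at hmem) t
  rw [← Ideal.map_pow] at hIJ hJI
  exact ⟨t', htt', exists_smul_mk₀_quotientPowMap_comp_eq_zero htt' hIJ hJI hJ N⟩

end Transition

/-! ### Local cohomology as a colimit of `Ext` modules -/

section LeftDerived

variable {C D : Type*} [Category* C] [Abelian C] [HasProjectiveResolutions C] [Category* D]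
  [Abelian D] (F : C ⥤ D) [F.Additive] {X Y : C}

/-- The monomorphism from `L_n F X`, the homology of `F P`, to the cokernel of
`F P_{n+1} ⟶ F P_n`. For a contravariant `F` it describes derived functors by cocycles. -/
noncomputable def leftDerivedToOpcycles (P : ProjectiveResolution X) (n : ℕ) :
    (F.leftDerived n).obj X ⟶
      (HomologicalComplex.opcyclesFunctor D (ComplexShape.down ℕ) n).obj
        ((F.mapHomologicalComplex _).obj P.complex) :=
  (P.isoLeftDerivedObj F n).hom ≫ (HomologicalComplex.natTransHomologyι D _ n).app _

instance (P : ProjectiveResolution X) (n : ℕ) : Mono (leftDerivedToOpcycles F P n) :=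
  have : Mono ((HomologicalComplex.natTransHomologyι D (ComplexShape.down ℕ) n).app
      ((F.mapHomologicalComplex _).obj P.complex)) :=
    inferInstanceAs (Mono (HomologicalComplex.homologyι _ n))
  mono_comp _ _

theorem leftDerivedToOpcycles_comp_fromOpcycles (P : ProjectiveResolution X) (m n : ℕ) :
    leftDerivedToOpcycles F P m ≫ HomologicalComplex.fromOpcycles _ m n = 0 :=
  (Category.assoc _ _ _).trans <|
    (congrArg _ (HomologicalComplex.homologyι_comp_fromOpcycles _ m n)).trans Limits.comp_zero

theorem leftDerivedToOpcycles_naturality {f : X ⟶ Y} {P : ProjectiveResolution X}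
    {Q : ProjectiveResolution Y} {φ : P.complex ⟶ Q.complex}
    (hφ : φ.f 0 ≫ Q.π.f 0 = P.π.f 0 ≫ f) (n : ℕ) :
    (F.leftDerived n).map f ≫ leftDerivedToOpcycles F Q n = leftDerivedToOpcycles F P n ≫
      (HomologicalComplex.opcyclesFunctor D _ n).map ((F.mapHomologicalComplex _).map φ) := by
  unfold leftDerivedToOpcycles
  rw [ProjectiveResolution.isoLeftDerivedObj_hom_naturality_assoc f P Q φ hφ F n, Category.assoc,
    ← NatTrans.naturality]

end LeftDerived

section ExtCocycles

variable {R : Type u} [CommRing R] {M M' : ModuleCat.{u} R} (P : ProjectiveResolution M)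
  (N : ModuleCat.{u} R) (n : ℕ)

/-- The complex `Hom(P, N)`, in the form in which it enters the definition of `Ext`. -/
abbrev homComplexOp : ChainComplex (ModuleCat.{u} R)ᵒᵖ ℕ :=
  (((linearYoneda R (ModuleCat.{u} R)).obj N).rightOp.mapHomologicalComplex _).obj P.complex

/-- The module of degree `n` cocycles of `Hom(P, N)`. -/
noncomputable abbrev extCocycles : ModuleCat.{u} R := ((homComplexOp P N).opcycles n).unop

/-- The map sending a cocycle to the morphism `P_n ⟶ N` it is. -/
noncomputable def extCocyclesVal : extCocycles P N n →ₗ[R] (P.complex.X n ⟶ N) :=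
  ((homComplexOp P N).pOpcycles n).unop.hom

/-- The map sending a cocycle to its class in `Ext`. -/
noncomputable def extCocyclesClass :
    extCocycles P N n →ₗ[R] ((Ext R (ModuleCat.{u} R) n).obj (op M)).obj N :=
  (leftDerivedToOpcycles ((linearYoneda R (ModuleCat.{u} R)).obj N).rightOp P n).unop.hom

variable {N n}

theorem extCocyclesVal_injective : Function.Injective (extCocyclesVal P N n) :=
  (ModuleCat.mono_iff_injective ((homComplexOp P N).pOpcycles n).unop).mp inferInstance

theorem d_comp_extCocyclesVal (b : extCocycles P N n) (m : ℕ) :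
    P.complex.d m n ≫ extCocyclesVal P N n b = 0 :=
  ConcreteCategory.congr_hom (congrArg Quiver.Hom.unop ((homComplexOp P N).d_pOpcycles m n)) b

theorem extCocyclesClass_surjective : Function.Surjective (extCocyclesClass P N n) :=
  (ModuleCat.epi_iff_surjective (leftDerivedToOpcycles
    ((linearYoneda R (ModuleCat.{u} R)).obj N).rightOp P n).unop).mp inferInstance

theorem extCocyclesClass_eq_zero {b : extCocycles P N n} {m : ℕ} {g : P.complex.X m ⟶ N}
    (hg : P.complex.d n m ≫ g = extCocyclesVal P N n b) : extCocyclesClass P N n b = 0 := by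
  have hb : b = ((homComplexOp P N).fromOpcycles n m).unop.hom g :=
    extCocyclesVal_injective P <| hg.symm.trans <| .symm <| ConcreteCategory.congr_hom
      (congrArg Quiver.Hom.unop ((homComplexOp P N).p_fromOpcycles n m)) g
  rw [hb]
  exact ConcreteCategory.congr_hom (congrArg Quiver.Hom.unop
    (leftDerivedToOpcycles_comp_fromOpcycles
      ((linearYoneda R (ModuleCat.{u} R)).obj N).rightOp P n m)) g

variable {P}

theorem exists_extCocyclesVal_eq_comp {P' : ProjectiveResolution M'} {f : M' ⟶ M}
    (φ : ProjectiveResolution.Hom P' P f) (b : extCocycles P N n) :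
    ∃ b' : extCocycles P' N n, extCocyclesVal P' N n b' = φ.hom.f n ≫ extCocyclesVal P N n b ∧
      extCocyclesClass P' N n b' =
        (((Ext R (ModuleCat.{u} R) n).map f.op).app N).hom (extCocyclesClass P N n b) := by
  let Φ : homComplexOp P' N ⟶ homComplexOp P N :=
    (((linearYoneda R (ModuleCat.{u} R)).obj N).rightOp.mapHomologicalComplex _).map φ.hom
  refine ⟨(HomologicalComplex.opcyclesMap Φ n).unop.hom b, ?_, ?_⟩
  · exact ConcreteCategory.congr_hom
      (congrArg Quiver.Hom.unop (HomologicalComplex.p_opcyclesMap Φ n)) b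
  · exact (ConcreteCategory.congr_hom (congrArg Quiver.Hom.unop
      (leftDerivedToOpcycles_naturality _ φ.hom_f_zero_comp_π_f_zero n)) b).symm

-- Local cohomology is built from `Ext` as a derived functor, while projective dimension speaks of
-- `Abelian.Ext`. A cocycle represents a class in either, which avoids constructing an isomorphism.
theorem smul_ext_map_eq_zero {f : M' ⟶ M} {k : ℕ} {s : R}
    (h : ∀ e : Abelian.Ext M N (k + 1), s • (Abelian.Ext.mk₀ f).comp e (zero_add (k + 1)) = 0)
    (e : ((Ext R (ModuleCat.{u} R) (k + 1)).obj (op M)).obj N) :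
    s • (((Ext R (ModuleCat.{u} R) (k + 1)).map f.op).app N).hom e = 0 := by
  let P := projectiveResolution M
  let P' := projectiveResolution M'
  let φ : ProjectiveResolution.Hom P' P f :=
    { hom := ProjectiveResolution.lift f P' P
      hom_f_zero_comp_π_f_zero := ProjectiveResolution.lift_commutes_zero f P' P }
  obtain ⟨b, rfl⟩ := extCocyclesClass_surjective P e
  obtain ⟨b', hval, hclass⟩ := exists_extCocyclesVal_eq_comp φ b
  have hcocycle (z : extCocycles P' N (k + 1)) := d_comp_extCocyclesVal P' z (k + 2)
  have hzero : P'.extMk (extCocyclesVal P' N (k + 1) (s • b')) (k + 2) rfl (hcocycle _) = 0 := by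
    have hb := h (P.extMk (extCocyclesVal P N (k + 1) b) (k + 2) rfl (d_comp_extCocyclesVal P b _))
    rw [ProjectiveResolution.mk₀_comp_extMk _ _ _ _ φ, Abelian.Ext.smul_eq_comp_mk₀,
      ProjectiveResolution.extMk_comp_mk₀] at hb
    simpa only [map_smul, hval, Linear.comp_smul, Category.comp_id] using hb
  obtain ⟨g, hg⟩ := (P'.extMk_eq_zero_iff _ _ _ _ k rfl).mp hzero
  rw [← hclass, ← map_smul]
  exact extCocyclesClass_eq_zero P' hg

end ExtCocycles

section LocalCohomology
open CategoryTheory.Limits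

variable {R : Type u} [CommRing R]

theorem notMem_support_localCohomology {I p : Ideal R} (hp : p.IsPrime) {N : ModuleCat.{u} R}
    {k : ℕ} (h : ∀ t : ℕ, ∃ (t' : ℕ) (htt' : t ≤ t'), ∃ s ∉ p,
      ∀ e : Abelian.Ext (ModuleCat.of R (R ⧸ I ^ t)) N (k + 1),
        s • (Abelian.Ext.mk₀ (quotientPowMap I htt')).comp e (zero_add (k + 1)) = 0) :
    ⟨p, hp⟩ ∉ Module.support R ((localCohomology I (k + 1)).obj N) := by
  let D := localCohomology.diagram (localCohomology.idealPowersDiagram I) (k + 1)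
  let ev := (evaluation (ModuleCat.{u} R) (ModuleCat.{u} R)).obj N
  let c := ev.mapCocone (colimit.cocone D)
  have hc : IsColimit c := isColimitOfPreserves ev (colimit.isColimit D)
  have := preservesSmallestFilteredColimits_of_preservesFilteredColimits (forget (ModuleCat.{u} R))
  have : IsFiltered ℕᵒᵖᵒᵖ := IsFiltered.of_equivalence (opOpEquivalence ℕ).symm
  refine Module.notMem_support_iff'.mpr fun x ↦ ?_
  obtain ⟨j, e, rfl⟩ := Concrete.isColimit_exists_rep (D ⋙ ev) hc x
  obtain ⟨t', htt', s, hs, hs0⟩ := h j.unop.unop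
  refine ⟨s, hs, ?_⟩
  let w : j ⟶ op (op t') := (homOfLE htt').op.op
  have hw : c.ι.app (op (op t')) ((D ⋙ ev).map w e) = c.ι.app j e :=
    ConcreteCategory.congr_hom (c.w w) e
  calc s • c.ι.app j e = c.ι.app (op (op t')) (s • (D ⋙ ev).map w e) := by
        rw [← hw]; exact ((c.ι.app (op (op t'))).hom.map_smul s _).symm
    _ = 0 := by
        rw [show s • (D ⋙ ev).map w e = 0 from smul_ext_map_eq_zero hs0 e]
        exact map_zero (c.ι.app (op (op t'))).hom

end LocalCohomology

/-! ### Dimension of the support -/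

section KrullDim

theorem krullDim_add_le_of_forall_le_height {α : Type*} [Preorder α] {S : Set α} {c : ℕ}
    (h : ∀ a ∈ S, (c : ℕ∞) ≤ Order.height a) :
    Order.krullDim S + c ≤ Order.krullDim α := by
  rcases isEmpty_or_nonempty S with hS | ⟨⟨a, ha⟩⟩
  · rw [Order.krullDim_eq_bot, WithBot.bot_add]
    exact bot_le
  have : Nonempty S := ⟨a, ha⟩
  have : Nonempty α := ⟨a⟩
  rw [Order.krullDim_eq_iSup_length, Order.krullDim_eq_iSup_length, ← WithBot.coe_natCast,
    ← WithBot.coe_add, WithBot.coe_le_coe, ENat.iSup_add]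
  refine iSup_le fun p ↦ ?_
  obtain ⟨q, hq, hqc⟩ := Order.exists_series_of_le_height (p.head : α) (h _ p.head.2)
  refine le_iSup_of_le (q.smash (p.map Subtype.val (Subtype.strictMono_coe S)) hq) ?_
  change (p.length + c : ℕ∞) ≤ ((q.length + p.length : ℕ) : ℕ∞)
  rw [hqc, add_comm, Nat.cast_add]

end KrullDim

theorem stmt8_general {R : Type u} [CommRing R] [IsRegularRing R] (I : Ideal R)
    (N : ModuleCat.{u} R) {i : ℕ} (hi : 0 < i) (hmin : ∀ q ∈ I.minimalPrimes, q.height ≠ i) :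
    Order.krullDim (Module.support R ((localCohomology I i).obj N)) + (i + 1 : ℕ) ≤
        ringKrullDim R ∧
      ∀ p ∈ Module.support R ((localCohomology I i).obj N),
        ((i + 1 : ℕ) : ℕ∞) ≤ Order.height p := by
  obtain ⟨k, rfl⟩ := Nat.exists_eq_add_one.mpr hi
  have hsupp : ∀ p ∈ Module.support R ((localCohomology I (k + 1)).obj N),
      ((k + 1 + 1 : ℕ) : ℕ∞) ≤ Order.height p := by
    intro p hp
    by_contra! hlt
    rw [← PrimeSpectrum.height_eq_orderHeight, Nat.cast_add_one,
      ENat.lt_natCast_add_one_iff] at hlt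
    exact notMem_support_localCohomology p.isPrime
      (exists_smul_mk₀_quotientPowMap_comp_eq_zero_of_height_le p.asIdeal (mod_cast hlt)
        (fun hht hp' ↦ hmin _ hp' (mod_cast hht)) N) hp
  exact ⟨krullDim_add_le_of_forall_le_height hsupp, hsupp⟩

theorem IsRegularLocal.isRegularLocalRing {R : Type} [CommRing R] [IsLocalRing R]
    (hR : IsRegularLocal R) : IsRegularLocalRing R := by
  obtain ⟨_, s, hs, hcard⟩ := hR
  refine .of_spanFinrank_maximalIdeal_le _ ?_
  rw [← hcard, ← hs]
  exact mod_cast (Submodule.spanFinrank_span_le_ncard_of_finite s.finite_toSet).trans_eq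
    (Set.ncard_coe_finset s)

theorem height_le_idealHeight {R : Type} [CommRing R] (I : Ideal R) :
    I.height ≤ idealHeight R I := by
  refine le_sInf ?_
  rintro _ ⟨p, hp, rfl⟩
  rw [← PrimeSpectrum.height_eq_orderHeight]
  exact Ideal.height_mono hp

/-- Regular local ring `R` of dimension `n` containing a field, `I` a proper
ideal all of whose minimal primes have height `d`.  Then for every `i > d`,
`dim H_I^i(R) ≤ n - (i+1)`; equivalently every prime in the support of `H_I^i(R)` has
height at least `i + 1`. -/
theorem stmt8 (R : Type) [CommRing R] [IsLocalRing R]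
    (hreg : IsRegularLocal R) (hfield : ContainsField R)
    (n : ℕ) (hdim : ringKrullDim R = (n : WithBot ℕ∞))
    (I : Ideal R) (hI : I ≠ ⊤) (d : ℕ)
    (hmin : ∀ p ∈ I.minimalPrimes, idealHeight R p = (d : ℕ∞))
    (i : ℕ) (hi : d < i) :
    moduleSuppDim R (LocalCohomologyMod R I i) + ((i + 1 : ℕ) : WithBot ℕ∞)
        ≤ (n : WithBot ℕ∞) ∧
      ∀ p : PrimeSpectrum R, p ∈ Module.support R (LocalCohomologyMod R I i) →
        ((i + 1 : ℕ) : ℕ∞) ≤ Order.height p := by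
  have := hreg.isRegularLocalRing
  have := isRegularRing_of_isRegularLocalRing R
  have hlt (q : Ideal R) (hq : q ∈ I.minimalPrimes) : q.height < i :=
    (height_le_idealHeight q).trans_lt (by rw [hmin q hq]; exact_mod_cast hi)
  rw [← hdim]
  exact stmt8_general I (ModuleCat.of R R) (Nat.zero_lt_of_lt hi) fun q hq ↦ (hlt q hq).ne
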